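/- Let m ≥ n ≥ 1 and let κ₁ ≥ κ₂ ≥ 0 be integers. Let λ be a partition of length at most m+n satisfying: λ_j + λ_{m+n+1−j} = κ₁ + κ₂ for j = 1,…,n; λ_{n+j} = κ₁ for j = 1,…,m−n; and λ_n ≥ κ₁. Set λ_0 := κ₁ + κ₂. Then every Littlewood–Richardson tableau of shape λ∖(κ₁·1^m) and weight κ₂·1^n has the following labeling: for 1 ≤ i ≤ n, all λ_i − κ₁ boxes in row i carry the symbol i; rows n+1,…,m contain no boxes; and for each 1 ≤ j ≤ n and each symbol i, the symbol i occurs in row m+j exactly λ_{i−j} − λ_{i−j+1} times if i ≥ j, and 0 times if i < j. -/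

import Mathlib

/-- A partition of length at most `r`, presented as a function on positive
indices: weakly decreasing on indices `≥ 1` and vanishing beyond `r`. -/
def IsPartitionOfLength (r : ℕ) (lam : ℕ → ℕ) : Prop :=
  (∀ i, 1 ≤ i → lam (i + 1) ≤ lam i) ∧ ∀ i, r < i → lam i = 0

/-- The partition `a·1^k`: first `k` parts equal to `a`, the rest `0`. -/
def onesPart (a k : ℕ) : ℕ → ℕ := fun i => if 1 ≤ i ∧ i ≤ k then a else 0

/-- The box `(i, j)` (row `i ≥ 1`, column `j`) lies in the skew shape `λ ∖ μ`. -/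
def InShape (lam mu : ℕ → ℕ) (p : ℕ × ℕ) : Prop :=
  1 ≤ p.1 ∧ mu p.1 < p.2 ∧ p.2 ≤ lam p.1

/-- The set of boxes read before (and including) position `(i, j)` in the
reading word: boxes in rows above `i`, together with boxes of row `i` in
columns `≥ j` (the reading goes right to left along rows, top row first). -/
def ReadingPrefix (lam mu : ℕ → ℕ) (i j : ℕ) : Set (ℕ × ℕ) :=
  {p | InShape lam mu p ∧ (p.1 < i ∨ (p.1 = i ∧ j ≤ p.2))}

/-- A Littlewood–Richardson tableau of shape `λ ∖ μ` and weight `ν` with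
symbols `1, …, s`: a filling of the boxes of `λ ∖ μ` (extended by `0` outside
of the shape) which is weakly increasing along rows, strictly increasing down
columns, uses the symbol `k` exactly `ν k` times, and whose reading word is a
lattice permutation. -/
def IsLRTableau (lam mu nu : ℕ → ℕ) (s : ℕ) (T : ℕ × ℕ → ℕ) : Prop :=
  (∀ p, InShape lam mu p → 1 ≤ T p ∧ T p ≤ s) ∧
  (∀ p, ¬ InShape lam mu p → T p = 0) ∧
  (∀ i j, InShape lam mu (i, j) → InShape lam mu (i, j + 1) →
    T (i, j) ≤ T (i, j + 1)) ∧
  (∀ i j, InShape lam mu (i, j) → InShape lam mu (i + 1, j) →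
    T (i, j) < T (i + 1, j)) ∧
  (∀ k, 1 ≤ k → k ≤ s → {p | InShape lam mu p ∧ T p = k}.ncard = nu k) ∧
  (∀ i j k, 1 ≤ k →
    {p | p ∈ ReadingPrefix lam mu i j ∧ T p = k + 1}.ncard ≤
      {p | p ∈ ReadingPrefix lam mu i j ∧ T p = k}.ncard)

-- The Littlewood–Richardson coefficient `c^λ_{μν}` (with `ν` regarded as
-- having `s` parts): the number of Littlewood–Richardson tableaux of shape
-- `λ ∖ μ` and weight `ν`, and `0` unless `μ ⊆ λ`.
open Classical in
noncomputable def LRCoeff (lam mu nu : ℕ → ℕ) (s : ℕ) : ℕ :=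
  if ∀ i, mu i ≤ lam i then {T : ℕ × ℕ → ℕ | IsLRTableau lam mu nu s T}.ncard
  else 0

/-- Extension of a partition by the value `c` at index `0`. -/
def lamExt (c : ℕ) (lam : ℕ → ℕ) : ℕ → ℕ := fun k => if k = 0 then c else lam k

/-! Column strictness makes the entries of row `r` that have `d` boxes below them in their column
at most `n - d`, so each row below row `m` contains many small symbols. The lattice condition makes
every entry of row `i ≤ n` equal to `i`, which uses up `λ_i - κ₁` of the `κ₂` symbols `i` and bounds
the number that are left for the rows below row `m`. By `λ_i + λ_{m+n+1-i} = κ₁ + κ₂` the two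
bounds have the same sum over these rows, so equality holds in each row. -/

namespace IsPartitionOfLength

variable {N : ℕ} {lam : ℕ → ℕ}

theorem le_of_le (h : IsPartitionOfLength N lam) {i j : ℕ} (hi : 1 ≤ i) (hij : i ≤ j) :
    lam j ≤ lam i := by
  induction j, hij using Nat.le_induction with
  | base => exact le_rfl
  | succ j hij ih => exact (h.1 j (hi.trans hij)).trans ih

theorem finite_inShape (h : IsPartitionOfLength N lam) (mu : ℕ → ℕ) :
    {p | InShape lam mu p}.Finite := by
  refine ((Set.finite_Iic N).prod (Set.finite_Iic (lam 1))).subset ?_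
  rintro ⟨i, j⟩ ⟨hi, hmu, hj⟩
  refine ⟨?_, hj.trans (h.le_of_le le_rfl hi)⟩
  by_contra hN
  have := h.2 i (not_le.mp hN)
  dsimp only at hmu hj
  omega

end IsPartitionOfLength

theorem onesPart_of_le (a : ℕ) {k i : ℕ} (hi : 1 ≤ i) (hik : i ≤ k) : onesPart a k i = a :=
  if_pos ⟨hi, hik⟩

theorem onesPart_of_lt (a : ℕ) {k i : ℕ} (hki : k < i) : onesPart a k i = 0 :=
  if_neg fun h => hki.not_ge h.2

theorem isPartitionOfLength_onesPart (a k : ℕ) : IsPartitionOfLength k (onesPart a k) := by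
  refine ⟨fun i hi => ?_, fun i => onesPart_of_lt a⟩
  unfold onesPart
  split_ifs <;> omega

theorem lamExt_add_eq {N n c : ℕ} {lam : ℕ → ℕ} (hlam : IsPartitionOfLength N lam)
    (hpair : ∀ j, 1 ≤ j → j ≤ n → lam j + lam (N + 1 - j) = c) {i : ℕ} (hi : i ≤ n) :
    lamExt c lam i + lam (N + 1 - i) = c := by
  rcases Nat.eq_zero_or_pos i with rfl | hpos
  · simp [lamExt, hlam.2 (N + 1) N.lt_succ_self]
  · simpa [lamExt, hpos.ne'] using hpair i hpos hi

/-- The number of times the symbol `k` occurs in row `r` of the filling `T` of `lam ∖ mu`. -/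
noncomputable def rowCount (lam mu : ℕ → ℕ) (T : ℕ × ℕ → ℕ) (r k : ℕ) : ℕ :=
  {p : ℕ × ℕ | InShape lam mu p ∧ p.1 = r ∧ T p = k}.ncard

theorem rowCount_eq_card (lam mu : ℕ → ℕ) (T : ℕ × ℕ → ℕ) {r : ℕ} (hr : 1 ≤ r) (k : ℕ) :
    rowCount lam mu T r k = ((Finset.Ioc (mu r) (lam r)).filter fun q => T (r, q) = k).card := by
  rw [← Set.ncard_coe_finset, ← Set.ncard_image_of_injective _ (Prod.mk_right_injective r),
    rowCount]
  congr 1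
  ext ⟨x, y⟩
  simp only [InShape, Set.mem_ofPred_eq, Finset.coe_filter, Finset.mem_Ioc, Set.mem_image,
    Prod.mk.injEq]
  constructor
  · rintro ⟨⟨-, hmu, hlam⟩, rfl, hT⟩
    exact ⟨y, ⟨⟨hmu, hlam⟩, hT⟩, rfl, rfl⟩
  · rintro ⟨q, ⟨⟨hmu, hlam⟩, hT⟩, rfl, rfl⟩
    exact ⟨⟨hr, hmu, hlam⟩, rfl, hT⟩

theorem sum_rowCount_le_ncard {lam mu : ℕ → ℕ} (hfin : {p | InShape lam mu p}.Finite)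
    (T : ℕ × ℕ → ℕ) (s : Finset ℕ) (k : ℕ) :
    ∑ r ∈ s, rowCount lam mu T r k ≤ {p | InShape lam mu p ∧ T p = k}.ncard := by
  have hfin' : {p | InShape lam mu p ∧ T p = k}.Finite := hfin.subset fun p hp => hp.1
  have hrow (r : ℕ) :
      rowCount lam mu T r k = (hfin'.toFinset.filter fun p => p.1 = r).card := by
    rw [← Set.ncard_coe_finset, rowCount]
    congr 1
    ext p
    simp only [Set.mem_ofPred_eq, Finset.coe_filter, Set.Finite.mem_toFinset]
    tauto
  rw [Set.ncard_eq_toFinset_card _ hfin', Finset.sum_congr rfl fun r _ => hrow r,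
    Finset.sum_card_fiberwise_eq_card_filter]
  exact Finset.card_filter_le _ _

namespace IsLRTableau

variable {N M s : ℕ} {lam mu nu : ℕ → ℕ} {T : ℕ × ℕ → ℕ}

theorem le_of_row (hT : IsLRTableau lam mu nu s T) {i j j' : ℕ} (hjj' : j ≤ j')
    (hj : InShape lam mu (i, j)) (hj' : InShape lam mu (i, j')) : T (i, j) ≤ T (i, j') := by
  obtain ⟨-, -, hrow, -⟩ := hT
  induction j', hjj' using Nat.le_induction with
  | base => exact le_rfl
  | succ j' hjj' ih =>
    have hbox : InShape lam mu (i, j') :=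
      ⟨hj.1, hj.2.1.trans_le hjj', (Nat.le_succ j').trans hj'.2.2⟩
    exact (ih hbox).trans (hrow i j' hbox hj')

theorem add_le_of_column (hT : IsLRTableau lam mu nu s T) (hlam : IsPartitionOfLength N lam)
    (hmu : IsPartitionOfLength M mu) {i j d : ℕ} (htop : InShape lam mu (i, j))
    (hbot : InShape lam mu (i + d, j)) : T (i, j) + d ≤ T (i + d, j) := by
  obtain ⟨-, -, -, hcol, -⟩ := hT
  induction d with
  | zero => exact le_rfl
  | succ d ih =>
    have hi : 1 ≤ i + d := Nat.le_add_right_of_le htop.1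
    have hbox : InShape lam mu (i + d, j) :=
      ⟨hi, (hmu.le_of_le htop.1 (Nat.le_add_right i d)).trans_lt htop.2.1,
        hbot.2.2.trans (hlam.1 _ hi)⟩
    exact (Nat.succ_le_succ (ih hbox)).trans (hcol (i + d) j hbox hbot)

theorem exists_row_lt_of_apply_eq_succ (hT : IsLRTableau lam mu nu s T)
    (hfin : {p | InShape lam mu p}.Finite) {i j k : ℕ} (hk : 1 ≤ k)
    (hbox : InShape lam mu (i, j)) (hTk : T (i, j) = k + 1) :
    ∃ p, InShape lam mu p ∧ p.1 < i ∧ T p = k := by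
  have hlattice := hT.2.2.2.2.2 i j k hk
  have hpos : 0 < {p | p ∈ ReadingPrefix lam mu i j ∧ T p = k + 1}.ncard :=
    (Set.ncard_pos (hfin.subset fun p hp => hp.1.1)).mpr
      ⟨(i, j), ⟨hbox, Or.inr ⟨rfl, le_rfl⟩⟩, hTk⟩
  obtain ⟨⟨x, y⟩, ⟨hp, hread⟩, hTp⟩ :=
    Set.nonempty_of_ncard_ne_zero (hpos.trans_le hlattice).ne'
  rcases hread with hlt | ⟨hx, hjy⟩
  · exact ⟨(x, y), hp, hlt, hTp⟩
  · obtain rfl : x = i := hx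
    exact absurd (hT.le_of_row hjy hbox hp) (by rw [hTk, hTp]; exact k.not_succ_le_self)

theorem apply_le_row (hT : IsLRTableau lam mu nu s T) (hfin : {p | InShape lam mu p}.Finite)
    {p : ℕ × ℕ} (hp : InShape lam mu p) : T p ≤ p.1 := by
  induction hk : T p generalizing p with
  | zero => exact Nat.zero_le _
  | succ k ih =>
    rcases Nat.eq_zero_or_pos k with rfl | hpos
    · exact hp.1
    · obtain ⟨q, hq, hlt, hTq⟩ := hT.exists_row_lt_of_apply_eq_succ hfin hpos hp hk
      exact (ih hq hTq).trans_lt hlt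

theorem apply_eq_row (hT : IsLRTableau lam mu nu s T) (hlam : IsPartitionOfLength N lam)
    (hmu : IsPartitionOfLength M mu) {i j : ℕ} (hconst : mu 1 ≤ mu i)
    (hbox : InShape lam mu (i, j)) : T (i, j) = i := by
  refine (hT.apply_le_row (hlam.finite_inShape mu) hbox).antisymm ?_
  obtain ⟨d, rfl⟩ := Nat.exists_eq_add_of_le hbox.1
  have htop : InShape lam mu (1, j) :=
    ⟨le_rfl, hconst.trans_lt hbox.2.1, hbox.2.2.trans (hlam.le_of_le le_rfl hbox.1)⟩
  calc 1 + d ≤ T (1, j) + d := Nat.add_le_add_right (hT.1 _ htop).1 d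
    _ ≤ T (1 + d, j) := hT.add_le_of_column hlam hmu htop hbox

theorem rowCount_self (hT : IsLRTableau lam mu nu s T) (hlam : IsPartitionOfLength N lam)
    (hmu : IsPartitionOfLength M mu) {i : ℕ} (hi : 1 ≤ i) (hconst : mu 1 ≤ mu i) :
    rowCount lam mu T i i = lam i - mu i := by
  rw [rowCount_eq_card lam mu T hi, Finset.filter_true_of_mem, Nat.card_Ioc]
  intro q hq
  rw [Finset.mem_Ioc] at hq
  exact hT.apply_eq_row hlam hmu hconst ⟨hi, hq⟩

theorem sub_le_sum_rowCount (hT : IsLRTableau lam mu nu s T) (hlam : IsPartitionOfLength N lam)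
    (hmu : IsPartitionOfLength M mu) {r : ℕ} (hr : 1 ≤ r) (d : ℕ) :
    lam (r + d) - mu r ≤ ∑ k ∈ Finset.Icc 1 (s - d), rowCount lam mu T r k := by
  rw [Finset.sum_congr rfl fun k _ => rowCount_eq_card lam mu T hr k,
    Finset.sum_card_fiberwise_eq_card_filter, ← Nat.card_Ioc]
  refine Finset.card_le_card fun q hq => ?_
  obtain ⟨hmuq, hqlam⟩ := Finset.mem_Ioc.mp hq
  have htop : InShape lam mu (r, q) :=
    ⟨hr, hmuq, hqlam.trans (hlam.le_of_le hr (Nat.le_add_right r d))⟩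
  have hbot : InShape lam mu (r + d, q) :=
    ⟨Nat.le_add_right_of_le hr, (hmu.le_of_le hr (Nat.le_add_right r d)).trans_lt hmuq, hqlam⟩
  have hcol := hT.add_le_of_column hlam hmu htop hbot
  have hbound := (hT.1 _ hbot).2
  exact Finset.mem_filter.mpr ⟨Finset.mem_Ioc.mpr htop.2,
    Finset.mem_Icc.mpr ⟨(hT.1 _ htop).1, Nat.le_sub_of_add_le (hcol.trans hbound)⟩⟩

variable {m n κ₁ κ₂ : ℕ}

theorem sum_rowCount_bottom_le (hT : IsLRTableau lam (onesPart κ₁ m) (onesPart κ₂ n) n T)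
    (hlam : IsPartitionOfLength (m + n) lam) (hmn : n ≤ m)
    (hpair : ∀ j, 1 ≤ j → j ≤ n → lam j + lam (m + n + 1 - j) = κ₁ + κ₂)
    {k : ℕ} (hk : 1 ≤ k) (hkn : k ≤ n) :
    ∑ r ∈ Finset.Icc (m + 1) (m + n), rowCount lam (onesPart κ₁ m) T r k ≤
      lam (m + n + 1 - k) := by
  have hkm := hkn.trans hmn
  have hmu := onesPart_of_le κ₁ hk hkm
  have htotal : lam k - κ₁ + ∑ r ∈ Finset.Icc (m + 1) (m + n),
      rowCount lam (onesPart κ₁ m) T r k ≤ κ₂ := by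
    have hdisj : k ∉ Finset.Icc (m + 1) (m + n) := by
      rw [Finset.mem_Icc]
      omega
    have hself : rowCount lam (onesPart κ₁ m) T k k = lam k - κ₁ := by
      rw [hT.rowCount_self hlam (isPartitionOfLength_onesPart κ₁ m) hk
        (by rw [hmu, onesPart_of_le κ₁ le_rfl (hk.trans hkm)]), hmu]
    have hweight := hT.2.2.2.2.1 k hk hkn
    rw [onesPart_of_le κ₂ hk hkn] at hweight
    have hle := sum_rowCount_le_ncard (hlam.finite_inShape (onesPart κ₁ m)) T
      (insert k (Finset.Icc (m + 1) (m + n))) k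
    rwa [Finset.sum_insert hdisj, hself, hweight] at hle
  have := hpair k hk hkn
  omega

theorem sum_rowCount_bottom_eq (hT : IsLRTableau lam (onesPart κ₁ m) (onesPart κ₂ n) n T)
    (hlam : IsPartitionOfLength (m + n) lam) (hmn : n ≤ m)
    (hpair : ∀ j, 1 ≤ j → j ≤ n → lam j + lam (m + n + 1 - j) = κ₁ + κ₂)
    {i r : ℕ} (hi : i ≤ n) (hr : r ∈ Finset.Icc (m + 1) (m + n)) :
    ∑ k ∈ Finset.Icc 1 i, rowCount lam (onesPart κ₁ m) T r k = lam (r + (n - i)) := by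
  have hlower : ∀ r ∈ Finset.Icc (m + 1) (m + n),
      lam (r + (n - i)) ≤ ∑ k ∈ Finset.Icc 1 i, rowCount lam (onesPart κ₁ m) T r k := by
    intro r hr
    have hmr : m < r := (Finset.mem_Icc.mp hr).1
    simpa only [onesPart_of_lt κ₁ hmr, Nat.sub_zero, Nat.sub_sub_self hi] using
      hT.sub_le_sum_rowCount hlam (isPartitionOfLength_onesPart κ₁ m) (Nat.one_le_of_lt hmr) (n - i)
  have hupper : ∑ r ∈ Finset.Icc (m + 1) (m + n),
        ∑ k ∈ Finset.Icc 1 i, rowCount lam (onesPart κ₁ m) T r k ≤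
      ∑ r ∈ Finset.Icc (m + 1) (m + n), lam (r + (n - i)) := by
    rw [Finset.sum_comm]
    calc ∑ k ∈ Finset.Icc 1 i, ∑ r ∈ Finset.Icc (m + 1) (m + n),
          rowCount lam (onesPart κ₁ m) T r k
        ≤ ∑ k ∈ Finset.Icc 1 i, lam (m + n + 1 - k) := by
          refine Finset.sum_le_sum fun k hk => ?_
          obtain ⟨hk, hki⟩ := Finset.mem_Icc.mp hk
          exact hT.sum_rowCount_bottom_le hlam hmn hpair hk (hki.trans hi)
      _ = ∑ r ∈ Finset.Icc (m + 1) (m + i), lam (r + (n - i)) := by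
          refine Finset.sum_nbij' (fun k => m + i + 1 - k) (fun r => m + i + 1 - r) ?_ ?_ ?_ ?_ ?_
          all_goals simp only [Finset.mem_Icc]; intro k hk
          on_goal 5 => congr 1
          all_goals omega
      _ ≤ ∑ r ∈ Finset.Icc (m + 1) (m + n), lam (r + (n - i)) :=
          Finset.sum_le_sum_of_subset (Finset.Icc_subset_Icc_right (Nat.add_le_add_left hi m))
  exact ((Finset.sum_eq_sum_iff_of_le hlower).mp
    ((Finset.sum_le_sum hlower).antisymm hupper) r hr).symm

theorem rowCount_bottom_eq (hT : IsLRTableau lam (onesPart κ₁ m) (onesPart κ₂ n) n T)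
    (hlam : IsPartitionOfLength (m + n) lam) (hmn : n ≤ m)
    (hpair : ∀ j, 1 ≤ j → j ≤ n → lam j + lam (m + n + 1 - j) = κ₁ + κ₂)
    {i j : ℕ} (hj : 1 ≤ j) (hjn : j ≤ n) (hi : 1 ≤ i) (hin : i ≤ n) :
    rowCount lam (onesPart κ₁ m) T (m + j) i =
      if j ≤ i then
        lamExt (κ₁ + κ₂) lam (i - j) - lamExt (κ₁ + κ₂) lam (i - j + 1)
      else 0 := by
  obtain ⟨i, rfl⟩ := Nat.exists_eq_add_of_le' hi
  have hr : m + j ∈ Finset.Icc (m + 1) (m + n) := by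
    rw [Finset.mem_Icc]
    omega
  have hcount := hT.sum_rowCount_bottom_eq hlam hmn hpair hin hr
  rw [Finset.sum_Icc_succ_top (Nat.le_add_left 1 i),
    hT.sum_rowCount_bottom_eq hlam hmn hpair (Nat.le_of_succ_le hin) hr] at hcount
  split_ifs with hji
  · have hpair₀ := lamExt_add_eq hlam hpair (i := i + 1 - j) (by omega)
    have hpair₁ := lamExt_add_eq hlam hpair (i := i + 1 - j + 1) (by omega)
    rw [show m + n + 1 - (i + 1 - j) = m + j + (n - i) by omega] at hpair₀
    rw [show m + n + 1 - (i + 1 - j + 1) = m + j + (n - (i + 1)) by omega] at hpair₁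
    omega
  · have hzero := hlam.2 (m + j + (n - (i + 1))) (by omega)
    omega

end IsLRTableau

theorem lr_tableau_labeling_general (m n κ₁ κ₂ : ℕ) (hmn : n ≤ m)
    (lam : ℕ → ℕ) (hlam : IsPartitionOfLength (m + n) lam)
    (hpair : ∀ j, 1 ≤ j → j ≤ n → lam j + lam (m + n + 1 - j) = κ₁ + κ₂)
    (hmid : ∀ j, 1 ≤ j → j ≤ m - n → lam (n + j) = κ₁) :
    ∀ T : ℕ × ℕ → ℕ, IsLRTableau lam (onesPart κ₁ m) (onesPart κ₂ n) n T →
      (∀ i j, 1 ≤ i → i ≤ n → InShape lam (onesPart κ₁ m) (i, j) →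
        T (i, j) = i) ∧
      (∀ i j, n + 1 ≤ i → i ≤ m → ¬ InShape lam (onesPart κ₁ m) (i, j)) ∧
      (∀ j i, 1 ≤ j → j ≤ n → 1 ≤ i → i ≤ n →
        {p : ℕ × ℕ | InShape lam (onesPart κ₁ m) p ∧ p.1 = m + j ∧
            T p = i}.ncard =
          if j ≤ i then
            lamExt (κ₁ + κ₂) lam (i - j) - lamExt (κ₁ + κ₂) lam (i - j + 1)
          else 0) := by
  intro T hT
  refine ⟨fun i j hi hin hbox => ?_, fun i j hni him ⟨hi, hmu, hle⟩ => ?_,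
    fun j i hj hjn hi hin => hT.rowCount_bottom_eq hlam hmn hpair hj hjn hi hin⟩
  · have hconst : onesPart κ₁ m 1 ≤ onesPart κ₁ m i := by
      rw [onesPart_of_le κ₁ le_rfl (by omega), onesPart_of_le κ₁ hi (hin.trans hmn)]
    exact hT.apply_eq_row hlam (isPartitionOfLength_onesPart κ₁ m) hconst hbox
  · have hrow := hmid (i - n) (by omega) (by omega)
    rw [Nat.add_sub_cancel' (Nat.le_of_succ_le hni)] at hrow
    rw [onesPart_of_le κ₁ hi him] at hmu
    exact hmu.not_ge (hle.trans_eq hrow)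

/-- Under the conditions of Lemma (skl), every Littlewood–Richardson tableau of
shape `λ ∖ (κ₁·1^m)` and weight `κ₂·1^n` has the prescribed labeling: every box
of row `i` (`1 ≤ i ≤ n`) carries the symbol `i`; rows `n+1, …, m` carry no
boxes; and row `m + j` carries the symbol `i` exactly
`λ_{i−j} − λ_{i−j+1}` times if `i ≥ j` (with `λ_0 := κ₁ + κ₂`) and `0` times if
`i < j`. -/
theorem lr_tableau_labeling (m n κ₁ κ₂ : ℕ) (hn : 1 ≤ n) (hmn : n ≤ m)
    (hκ : κ₂ ≤ κ₁) (lam : ℕ → ℕ) (hlam : IsPartitionOfLength (m + n) lam)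
    (hpair : ∀ j, 1 ≤ j → j ≤ n → lam j + lam (m + n + 1 - j) = κ₁ + κ₂)
    (hmid : ∀ j, 1 ≤ j → j ≤ m - n → lam (n + j) = κ₁)
    (hlast : κ₁ ≤ lam n) :
    ∀ T : ℕ × ℕ → ℕ, IsLRTableau lam (onesPart κ₁ m) (onesPart κ₂ n) n T →
      (∀ i j, 1 ≤ i → i ≤ n → InShape lam (onesPart κ₁ m) (i, j) →
        T (i, j) = i) ∧
      (∀ i j, n + 1 ≤ i → i ≤ m → ¬ InShape lam (onesPart κ₁ m) (i, j)) ∧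
      (∀ j i, 1 ≤ j → j ≤ n → 1 ≤ i → i ≤ n →
        {p : ℕ × ℕ | InShape lam (onesPart κ₁ m) p ∧ p.1 = m + j ∧
            T p = i}.ncard =
          if j ≤ i then
            lamExt (κ₁ + κ₂) lam (i - j) - lamExt (κ₁ + κ₂) lam (i - j + 1)
          else 0) := by
  exact lr_tableau_labeling_general m n κ₁ κ₂ hmn lam hlam hpair hmid
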